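/- arXiv:1505.02978 — 3 statements merged into one kernel-verified Lean document; each statement's English description precedes it below -/
import Mathlib

section
/- Let γ : ℝ × [0,T) → ℝ² be a smooth family of closed regular plane curves satisfying the curve diffusion flow equation ∂_t γ = −κ_ss ν, and suppose the signed enclosed area satisfies A(0) ≠ 0. Then the signed isoperimetric ratio I(t) = L(t)² / (4π A(t)) satisfies I(t) = I(0) · exp(−∫₀^t (2/L(τ)) ∫₀^{2π} (κ_s)² |∂_u γ| du dτ) for all t ∈ [0,T); in particular |I(t)| is monotone nonincreasing. -/
/-!
For any smooth family of closed regular curves, the first variation formulas are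
`dL/dt = -∫ ⟨∂_t γ, ν⟩ κ ds` and `dA/dt = ∫ ⟨∂_t γ, ν⟩ ds`: up to an exact `u`-derivative, these
are the time derivatives of the two densities. Along the flow `⟨∂_t γ, ν⟩ = -κ_ss`, so integrating
by parts over the closed curve gives `dL/dt = -∫ κ_s² ds` and `dA/dt = 0`. Hence the ratio
`I = L² / (4π A)` solves the linear equation `I' = -(2 / L) (∫ κ_s² ds) I`.

The time derivatives are two-sided, so they are computed at interior times only; a closed endpoint
such as `t = 0` is reached by continuity.
-/

open Real MeasureTheory Filter

/-- Euclidean inner product on `ℝ × ℝ`. -/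
def innerP (a b : ℝ × ℝ) : ℝ := a.1 * b.1 + a.2 * b.2

/-- Speed `|γ'|` of a plane curve in a general parametrisation. -/
noncomputable def speed (γ : ℝ → ℝ × ℝ) (u : ℝ) : ℝ :=
  Real.sqrt ((deriv γ u).1 ^ 2 + (deriv γ u).2 ^ 2)

/-- Unit normal `ν = |γ'|⁻¹ (y', -x')`. -/
noncomputable def nuG (γ : ℝ → ℝ × ℝ) (u : ℝ) : ℝ × ℝ :=
  ((deriv γ u).2 / speed γ u, -(deriv γ u).1 / speed γ u)

/-- Arc-length derivative `∂_s = |γ'|⁻¹ ∂_u` of a scalar function. -/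
noncomputable def arcD (γ : ℝ → ℝ × ℝ) (f : ℝ → ℝ) (u : ℝ) : ℝ :=
  (speed γ u)⁻¹ * deriv f u

/-- Arc-length derivative of a vector-valued function. -/
noncomputable def arcDV (γ : ℝ → ℝ × ℝ) (F : ℝ → ℝ × ℝ) (u : ℝ) : ℝ × ℝ :=
  (speed γ u)⁻¹ • deriv F u

/-- Curvature `κ = ⟨∂_s² γ, ν⟩`. -/
noncomputable def curvG (γ : ℝ → ℝ × ℝ) (u : ℝ) : ℝ :=
  innerP (arcDV γ (arcDV γ γ) u) (nuG γ u)

/-- `κ_s`, the arc-length derivative of the curvature. -/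
noncomputable def curvGS (γ : ℝ → ℝ × ℝ) (u : ℝ) : ℝ := arcD γ (curvG γ) u

/-- `κ_ss`, the second arc-length derivative of the curvature. -/
noncomputable def curvGSS (γ : ℝ → ℝ × ℝ) (u : ℝ) : ℝ := arcD γ (curvGS γ) u

/-- Length of the closed curve `γ(·,t)` over one period `[0, 2π]`. -/
noncomputable def clen (γ : ℝ → ℝ → ℝ × ℝ) (t : ℝ) : ℝ :=
  ∫ u in (0:ℝ)..(2 * Real.pi), speed (fun u' => γ u' t) u

/-- Signed enclosed area `A(t) = (1/2) ∫₀^{2π} (x y_u − y x_u) du`. -/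
noncomputable def signedArea (γ : ℝ → ℝ → ℝ × ℝ) (t : ℝ) : ℝ :=
  (1/2) * ∫ u in (0:ℝ)..(2 * Real.pi),
    ((γ u t).1 * deriv (fun u' => (γ u' t).2) u - (γ u t).2 * deriv (fun u' => (γ u' t).1) u)

/-- Signed isoperimetric ratio `I(t) = L(t)² / (4π A(t))`. -/
noncomputable def isoRatio (γ : ℝ → ℝ → ℝ × ℝ) (t : ℝ) : ℝ :=
  (clen γ t) ^ 2 / (4 * Real.pi * signedArea γ t)

open Set Function
open scoped ContDiff Topology

section RealAnalysis

variable {E : Type*} [NormedAddCommGroup E] [NormedSpace ℝ E]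

theorem periodic_deriv {f : ℝ → E} {p : ℝ} (hf : Periodic f p) : Periodic (deriv f) p := fun x => by
  rw [← deriv_comp_add_const f p x, funext hf]

theorem periodic_deriv_time {I : Set ℝ} {F : ℝ → ℝ → E} {t p : ℝ}
    (hper : ∀ s ∈ I, Periodic (F · s) p) (ht : t ∈ interior I) :
    Periodic (fun u => deriv (F u) t) p := fun u =>
  Filter.EventuallyEq.deriv_eq <| by
    filter_upwards [mem_interior_iff_mem_nhds.1 ht] with s hs using hper s hs u

variable [CompleteSpace E]

theorem integral_deriv_eq_zero_of_periodic {f : ℝ → E} {p : ℝ} (hf : ContDiff ℝ 1 f)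
    (hp : Periodic f p) : ∫ u in (0 : ℝ)..p, deriv f u = 0 := by
  rw [intervalIntegral.integral_deriv_eq_sub (fun u _ => hf.differentiable one_ne_zero u)
    ((hf.continuous_deriv le_rfl).intervalIntegrable 0 p), hp.eq, sub_self]

variable {I : Set ℝ} {f : ℝ → E} {s t : ℝ}

theorem Ioo_min_max_subset_interior (hI : I.OrdConnected) (hs : s ∈ I) (ht : t ∈ I) :
    Ioo (min s t) (max s t) ⊆ interior I :=
  interior_Icc (a := min s t) (b := max s t) ▸ interior_mono (hI.uIcc_subset hs ht)

theorem eq_of_hasDerivAt_zero_interior (hI : I.OrdConnected) (hf : ContinuousOn f I)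
    (hf' : ∀ r ∈ interior I, HasDerivAt f 0 r) (hs : s ∈ I) (ht : t ∈ I) : f t = f s := by
  have h := intervalIntegral.integral_eq_sub_of_hasDeriv_right
    (hf.mono (hI.uIcc_subset hs ht))
    (fun r hr => (hf' r (Ioo_min_max_subset_interior hI hs ht hr)).hasDerivWithinAt)
    intervalIntegrable_const
  rw [intervalIntegral.integral_zero] at h
  exact sub_eq_zero.1 h.symm

theorem eq_exp_integral_smul_of_hasDerivAt_interior {g : ℝ → ℝ} (hI : I.OrdConnected)
    (hf : ContinuousOn f I) (hg : ContinuousOn g I)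
    (hf' : ∀ r ∈ interior I, HasDerivAt f (g r • f r) r) (hs : s ∈ I) (ht : t ∈ I) :
    f t = exp (∫ r in s..t, g r) • f s := by
  have hJ : uIcc s t ⊆ I := hI.uIcc_subset hs ht
  have hprim : ContinuousOn (fun r => ∫ x in s..r, g x) (uIcc s t) :=
    intervalIntegral.continuousOn_primitive_interval' (hg.mono hJ).intervalIntegrable left_mem_uIcc
  have hprim' : ∀ r ∈ interior (uIcc s t), HasDerivAt (fun r => ∫ x in s..r, g x) (g r) r := by
    intro r hr
    have hrI : r ∈ interior I := interior_mono hJ hr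
    exact intervalIntegral.integral_hasDerivAt_right
      (hg.mono (hI.uIcc_subset hs (interior_subset hrI))).intervalIntegrable
      ((hg.mono interior_subset).stronglyMeasurableAtFilter isOpen_interior r hrI)
      (hg.continuousAt (mem_interior_iff_mem_nhds.1 hrI))
  have hconst : exp (-∫ x in s..t, g x) • f t = exp (-∫ x in s..s, g x) • f s := by
    refine eq_of_hasDerivAt_zero_interior (f := fun r => exp (-∫ x in s..r, g x) • f r)
      ordConnected_uIcc (hprim.neg.rexp.smul (hf.mono hJ)) (fun r hr => ?_)
      left_mem_uIcc right_mem_uIcc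
    exact ((hprim' r hr).neg.exp.smul (hf' r (interior_mono hJ hr))).congr_deriv (by module)
  rw [intervalIntegral.integral_same, neg_zero, exp_zero, one_smul] at hconst
  rw [← hconst, smul_smul, ← exp_add, add_neg_cancel, exp_zero, one_smul]

end RealAnalysis

/-- Joint smoothness of a one-parameter family `F u t`, for `u ∈ ℝ` and times `t ∈ I`; at times
in `I` that are not interior the smoothness is one-sided. -/
def SmoothFamily {E : Type*} [NormedAddCommGroup E] [NormedSpace ℝ E]
    (I : Set ℝ) (F : ℝ → ℝ → E) : Prop :=
  ContDiffOn ℝ ∞ (fun p : ℝ × ℝ => F p.1 p.2) (univ ×ˢ I)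

namespace SmoothFamily

variable {E : Type*} [NormedAddCommGroup E] [NormedSpace ℝ E] {I : Set ℝ} {F : ℝ → ℝ → E}
  {u t : ℝ}

theorem mono {J : Set ℝ} (hF : SmoothFamily I F) (hJ : J ⊆ I) : SmoothFamily J F :=
  ContDiffOn.mono hF (prod_mono_right hJ)

theorem contDiff_slice (hF : SmoothFamily I F) (ht : t ∈ I) : ContDiff ℝ ∞ (F · t) := by
  rw [← contDiffOn_univ]
  exact ContDiffOn.comp (f := fun u : ℝ => (u, t)) hF
    (contDiff_id.prodMk contDiff_const).contDiffOn fun u _ => ⟨mem_univ u, ht⟩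

theorem hasDerivAt_slice (hF : SmoothFamily I F) (ht : t ∈ I) (u : ℝ) :
    HasDerivAt (F · t) (deriv (F · t) u) u :=
  ((hF.contDiff_slice ht).differentiable (by simp) u).hasDerivAt

theorem deriv_space (hF : SmoothFamily I F) (hI : UniqueDiffOn ℝ I) :
    SmoothFamily I fun u t => deriv (F · t) u := by
  have hpartial := (ContDiffOn.fderivWithin (m := ∞) hF (uniqueDiffOn_univ.prod hI)
    (by simp)).clm_apply (contDiffOn_const (c := ((1 : ℝ), (0 : ℝ))))
  refine hpartial.congr fun p hp => ?_
  have hline : HasDerivWithinAt (fun u : ℝ => (u, p.2)) ((1 : ℝ), (0 : ℝ)) univ p.1 :=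
    ((hasDerivAt_id p.1).prodMk (hasDerivAt_const p.1 p.2)).hasDerivWithinAt
  have hF' := (ContDiffOn.differentiableOn hF (by simp) p hp).hasFDerivWithinAt
  have hmaps : MapsTo (fun u : ℝ => (u, p.2)) univ (univ ×ˢ I) := fun u _ => ⟨mem_univ u, hp.2⟩
  exact (hasDerivWithinAt_univ.1 (hF'.comp_hasDerivWithinAt p.1 hline hmaps)).deriv

theorem contDiffAt (hF : SmoothFamily I F) (ht : t ∈ interior I) (u : ℝ) :
    ContDiffAt ℝ ∞ (fun p : ℝ × ℝ => F p.1 p.2) (u, t) :=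
  ContDiffOn.contDiffAt hF (prod_mem_nhds Filter.univ_mem (mem_interior_iff_mem_nhds.1 ht))

theorem hasDerivAt_space_fderiv (hF : SmoothFamily I F) (ht : t ∈ interior I) (u : ℝ) :
    HasDerivAt (F · t) (fderiv ℝ (fun p : ℝ × ℝ => F p.1 p.2) (u, t) (1, 0)) u :=
  ((hF.contDiffAt ht u).differentiableAt (by simp)).hasFDerivAt.comp_hasDerivAt
    (f := fun v => (v, t)) u ((hasDerivAt_id u).prodMk (hasDerivAt_const u t))

theorem hasDerivAt_time_fderiv (hF : SmoothFamily I F) (ht : t ∈ interior I) (u : ℝ) :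
    HasDerivAt (F u) (fderiv ℝ (fun p : ℝ × ℝ => F p.1 p.2) (u, t) (0, 1)) t :=
  ((hF.contDiffAt ht u).differentiableAt (by simp)).hasFDerivAt.comp_hasDerivAt t
    ((hasDerivAt_const t u).prodMk (hasDerivAt_id t))

theorem hasDerivAt_time (hF : SmoothFamily I F) (ht : t ∈ interior I) (u : ℝ) :
    HasDerivAt (F u) (deriv (F u) t) t :=
  (hF.hasDerivAt_time_fderiv ht u).differentiableAt.hasDerivAt

theorem deriv_time (hF : SmoothFamily I F) :
    SmoothFamily (interior I) fun u t => deriv (F u) t := by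
  have hpartial := (ContDiffOn.fderiv_of_isOpen (m := ∞) (hF.mono interior_subset)
    (isOpen_univ.prod isOpen_interior) (by simp)).clm_apply
    (contDiffOn_const (c := ((0 : ℝ), (1 : ℝ))))
  exact hpartial.congr fun p hp => (hF.hasDerivAt_time_fderiv hp.2 p.1).deriv

theorem deriv_comm (hF : SmoothFamily I F) (ht : t ∈ interior I) (u : ℝ) :
    deriv (fun s => deriv (F · s) u) t = deriv (fun v => deriv (F v) t) u := by
  set G : ℝ × ℝ → E := fun p => F p.1 p.2
  have hG := hF.contDiffAt ht u
  have hsymm : IsSymmSndFDerivAt ℝ G (u, t) :=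
    hG.isSymmSndFDerivAt (by simpa using WithTop.coe_le_coe.2 (le_top : (2 : ℕ∞) ≤ ⊤))
  have hG' : HasFDerivAt (fderiv ℝ G) (fderiv ℝ (fderiv ℝ G) (u, t)) (u, t) :=
    ((hG.fderiv_right (m := ∞) (by simp)).differentiableAt (by simp)).hasFDerivAt
  have htime : HasDerivAt (fun s => fderiv ℝ G (u, s) (1, 0))
      (fderiv ℝ (fderiv ℝ G) (u, t) (0, 1) (1, 0)) t := by
    simpa using (hG'.comp_hasDerivAt t ((hasDerivAt_const t u).prodMk (hasDerivAt_id t))).clm_apply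
      (hasDerivAt_const t ((1 : ℝ), (0 : ℝ)))
  have hspace : HasDerivAt (fun v => fderiv ℝ G (v, t) (0, 1))
      (fderiv ℝ (fderiv ℝ G) (u, t) (1, 0) (0, 1)) u := by
    simpa using (hG'.comp_hasDerivAt (f := fun v => (v, t)) u
      ((hasDerivAt_id u).prodMk (hasDerivAt_const u t))).clm_apply
      (hasDerivAt_const u ((0 : ℝ), (1 : ℝ)))
  have hFu : (fun s => deriv (F · s) u) =ᶠ[𝓝 t] fun s => fderiv ℝ G (u, s) (1, 0) := by
    filter_upwards [isOpen_interior.mem_nhds ht] with s hs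
    exact (hF.hasDerivAt_space_fderiv hs u).deriv
  have hFt : (fun v => deriv (F v) t) = fun v => fderiv ℝ G (v, t) (0, 1) :=
    funext fun v => (hF.hasDerivAt_time_fderiv ht v).deriv
  rw [hFu.deriv_eq, hFt, htime.deriv, hspace.deriv, hsymm (1, 0) (0, 1)]

theorem hasDerivAt_time_deriv_space (hF : SmoothFamily I F) (ht : t ∈ interior I) (u : ℝ) :
    HasDerivAt (fun s => deriv (F · s) u) (deriv (fun v => deriv (F v) t) u) t := by
  have h := (hF.mono interior_subset).deriv_space isOpen_interior.uniqueDiffOn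
  exact hF.deriv_comm ht u ▸ h.hasDerivAt_time (by rwa [interior_interior]) u

theorem continuousOn_integral (hF : SmoothFamily I F) (a b : ℝ) :
    ContinuousOn (fun t => ∫ u in a..b, F u t) I := by
  rw [continuousOn_iff_continuous_domRestrict]
  refine intervalIntegral.continuous_parametric_intervalIntegral_of_continuous'
    (f := fun (t : I) u => F u t) ?_ a b
  exact (ContDiffOn.continuousOn hF).comp_continuous (f := fun q : I × ℝ => (q.2, (q.1 : ℝ)))
    (by fun_prop) fun q => ⟨mem_univ _, q.1.2⟩

theorem hasDerivAt_integral (hF : SmoothFamily I F) (ht : t ∈ interior I) (a b : ℝ) :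
    HasDerivAt (fun s => ∫ u in a..b, F u s) (∫ u in a..b, deriv (F u) t) t := by
  obtain ⟨r, hr, hrI⟩ := Metric.nhds_basis_closedBall.mem_iff.1 (isOpen_interior.mem_nhds ht)
  have hF' := hF.deriv_time
  have hK : IsCompact (uIcc a b ×ˢ Metric.closedBall t r) :=
    isCompact_uIcc.prod (isCompact_closedBall t r)
  obtain ⟨C, hC⟩ := hK.exists_bound_of_continuousOn
    ((ContDiffOn.continuousOn hF').mono (prod_mono (subset_univ (uIcc a b)) hrI))
  refine (intervalIntegral.hasDerivAt_integral_of_dominated_loc_of_deriv_le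
    (F := fun s u => F u s) (F' := fun s u => deriv (F u) s)
    (bound := fun _ => C) (Metric.closedBall_mem_nhds t hr) ?_ ?_ ?_ ?_ ?_ ?_).2
  · filter_upwards [mem_interior_iff_mem_nhds.1 ht] with s hs
    exact (hF.contDiff_slice hs).continuous.aestronglyMeasurable
  · exact (hF.contDiff_slice (interior_subset ht)).continuous.intervalIntegrable a b
  · exact (hF'.contDiff_slice ht).continuous.aestronglyMeasurable
  · exact .of_forall fun u hu s hs => hC (u, s) ⟨uIoc_subset_uIcc hu, hs⟩
  · exact intervalIntegrable_const
  · exact .of_forall fun u _ s hs => hF.hasDerivAt_time (hrI hs) u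

theorem hasDerivAt_integral_of_periodic_flux [CompleteSpace E] (hF : SmoothFamily I F)
    (ht : t ∈ interior I) {P Q : ℝ → E} {p : ℝ} (hP : ContDiff ℝ 1 P) (hPp : Periodic P p)
    (hFt : ∀ u, deriv (F u) t = deriv P u + Q u) :
    HasDerivAt (fun s => ∫ u in (0 : ℝ)..p, F u s) (∫ u in (0 : ℝ)..p, Q u) t := by
  have hcont : Continuous fun u => deriv (F u) t := (hF.deriv_time.contDiff_slice ht).continuous
  refine (hF.hasDerivAt_integral ht 0 p).congr_deriv ?_
  rw [← sub_zero (∫ u in (0 : ℝ)..p, deriv (F u) t), ← integral_deriv_eq_zero_of_periodic hP hPp,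
    ← intervalIntegral.integral_sub (hcont.intervalIntegrable 0 p)
      ((hP.continuous_deriv le_rfl).intervalIntegrable 0 p)]
  simp only [hFt, add_sub_cancel_left]

end SmoothFamily

section Components

variable {E F : Type*} [NormedAddCommGroup E] [NormedSpace ℝ E] [NormedAddCommGroup F]
  [NormedSpace ℝ F] {x : ℝ}

theorem hasDerivAt_fst {f : ℝ → E × F} {f' : E × F} (hf : HasDerivAt f f' x) :
    HasDerivAt (fun x => (f x).1) f'.1 x := by
  simpa using hf.hasFDerivAt.fst.hasDerivAt

theorem hasDerivAt_snd {f : ℝ → E × F} {f' : E × F} (hf : HasDerivAt f f' x) :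
    HasDerivAt (fun x => (f x).2) f'.2 x := by
  simpa using hf.hasFDerivAt.snd.hasDerivAt

theorem hasDerivAt_innerP {f g : ℝ → ℝ × ℝ} {f' g' : ℝ × ℝ} (hf : HasDerivAt f f' x)
    (hg : HasDerivAt g g' x) :
    HasDerivAt (fun x => innerP (f x) (g x)) (innerP (f x) g' + innerP f' (g x)) x := by
  refine (((hasDerivAt_fst hf).mul (hasDerivAt_fst hg)).add
    ((hasDerivAt_snd hf).mul (hasDerivAt_snd hg))).congr_deriv ?_
  simp only [innerP]
  ring

end Components

section PlaneCurve

variable {c : ℝ → ℝ × ℝ} {u p : ℝ}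

theorem speed_nonneg (c : ℝ → ℝ × ℝ) (u : ℝ) : 0 ≤ speed c u := Real.sqrt_nonneg _

theorem sq_add_sq_deriv_pos (h : deriv c u ≠ 0) : 0 < (deriv c u).1 ^ 2 + (deriv c u).2 ^ 2 := by
  contrapose! h
  have hx := sq_nonneg (deriv c u).1
  have hy := sq_nonneg (deriv c u).2
  exact Prod.ext (sq_eq_zero_iff.1 (by linarith)) (sq_eq_zero_iff.1 (by linarith))

theorem speed_pos (h : deriv c u ≠ 0) : 0 < speed c u :=
  Real.sqrt_pos.2 (sq_add_sq_deriv_pos h)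

theorem speed_mul_arcD (h : deriv c u ≠ 0) (f : ℝ → ℝ) : speed c u * arcD c f u = deriv f u :=
  mul_inv_cancel_left₀ (speed_pos h).ne' _

theorem speed_smul_arcDV (h : deriv c u ≠ 0) (F : ℝ → ℝ × ℝ) :
    speed c u • arcDV c F u = deriv F u :=
  smul_inv_smul₀ (speed_pos h).ne' _

theorem nuG_eq_rotate_arcDV_self (c : ℝ → ℝ × ℝ) (u : ℝ) :
    nuG c u = ((arcDV c c u).2, -(arcDV c c u).1) := by
  simp only [nuG, arcDV, Prod.smul_fst, Prod.smul_snd, smul_eq_mul, inv_mul_eq_div, neg_div]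

theorem innerP_arcDV_self (h : deriv c u ≠ 0) : innerP (arcDV c c u) (arcDV c c u) = 1 := by
  have hs : speed c u ^ 2 = (deriv c u).1 ^ 2 + (deriv c u).2 ^ 2 :=
    Real.sq_sqrt (sq_add_sq_deriv_pos h).le
  have hpos := speed_pos h
  simp only [innerP, arcDV, Prod.smul_fst, Prod.smul_snd, smul_eq_mul]
  field_simp
  exact hs.symm

theorem deriv_arcDV_self (h : ∀ᶠ v in 𝓝 u, deriv c v ≠ 0)
    (hd : DifferentiableAt ℝ (arcDV c c) u) :
    deriv (arcDV c c) u = (curvG c u * speed c u) • nuG c u := by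
  have hu := h.self_of_nhds
  have hunit := innerP_arcDV_self hu
  have horth : innerP (arcDV c c u) (deriv (arcDV c c) u) = 0 := by
    have hone : (fun v => innerP (arcDV c c v) (arcDV c c v)) =ᶠ[𝓝 u] fun _ => 1 :=
      h.mono fun v hv => innerP_arcDV_self hv
    have h₀ := (hasDerivAt_innerP hd.hasDerivAt hd.hasDerivAt).deriv
    rw [hone.deriv_eq, deriv_const] at h₀
    simp only [innerP] at h₀ ⊢
    linarith
  have hcurv : curvG c u * speed c u = innerP (deriv (arcDV c c) u) (nuG c u) := by
    rw [← speed_smul_arcDV hu (arcDV c c)]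
    simp only [curvG, innerP, Prod.smul_fst, Prod.smul_snd, smul_eq_mul]
    ring
  rw [hcurv, nuG_eq_rotate_arcDV_self]
  simp only [innerP] at hunit horth ⊢
  ext <;> simp only [Prod.smul_fst, Prod.smul_snd, smul_eq_mul]
  · linear_combination (arcDV c c u).1 * horth - (deriv (arcDV c c) u).1 * hunit
  · linear_combination (arcDV c c u).2 * horth - (deriv (arcDV c c) u).2 * hunit

theorem speed_periodic (h : Periodic c p) : Periodic (speed c) p := fun u => by
  simp only [speed, periodic_deriv h u]

theorem nuG_periodic (h : Periodic c p) : Periodic (nuG c) p := fun u => by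
  simp only [nuG, periodic_deriv h u, speed_periodic h u]

theorem arcD_periodic (h : Periodic c p) {f : ℝ → ℝ} (hf : Periodic f p) :
    Periodic (arcD c f) p := fun u => by
  simp only [arcD, periodic_deriv hf u, speed_periodic h u]

theorem arcDV_periodic (h : Periodic c p) {F : ℝ → ℝ × ℝ} (hF : Periodic F p) :
    Periodic (arcDV c F) p := fun u => by
  simp only [arcDV, periodic_deriv hF u, speed_periodic h u]

theorem curvG_periodic (h : Periodic c p) : Periodic (curvG c) p := fun u => by
  simp only [curvG, arcDV_periodic h (arcDV_periodic h h) u, nuG_periodic h u]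

theorem curvGS_periodic (h : Periodic c p) : Periodic (curvGS c) p :=
  arcD_periodic h (curvG_periodic h)

theorem integral_mul_arcD_mul_speed (hc : ∀ u, deriv c u ≠ 0) {f g : ℝ → ℝ}
    (hf : ContDiff ℝ 1 f) (hg : ContDiff ℝ 1 g) (hfp : Periodic f p) (hgp : Periodic g p) :
    ∫ u in (0 : ℝ)..p, f u * arcD c g u * speed c u =
      -∫ u in (0 : ℝ)..p, arcD c f u * g u * speed c u := by
  have hparts := intervalIntegral.integral_mul_deriv_eq_deriv_mul (a := 0) (b := p)
    (fun u _ => (hf.differentiable one_ne_zero u).hasDerivAt)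
    (fun u _ => (hg.differentiable one_ne_zero u).hasDerivAt)
    ((hf.continuous_deriv le_rfl).intervalIntegrable 0 p)
    ((hg.continuous_deriv le_rfl).intervalIntegrable 0 p)
  rw [hfp.eq, hgp.eq, sub_self, zero_sub] at hparts
  have hg' (u : ℝ) : f u * arcD c g u * speed c u = f u * deriv g u := by
    rw [← speed_mul_arcD (hc u) g]
    ring
  have hf' (u : ℝ) : arcD c f u * g u * speed c u = deriv f u * g u := by
    rw [← speed_mul_arcD (hc u) f]
    ring
  simpa only [hg', hf'] using hparts

end PlaneCurve

/-- A smooth family of regular plane curves `γ(·, t)`, `t ∈ I`; the curves need not be closed. -/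
structure RegularFamily (I : Set ℝ) (γ : ℝ → ℝ → ℝ × ℝ) : Prop where
  smooth : SmoothFamily I γ
  deriv_ne_zero : ∀ u, ∀ t ∈ I, deriv (γ · t) u ≠ 0

/-- The Dirichlet energy `∫ κ_s² ds` of the curvature of `γ(·, t)` over one period. -/
noncomputable def curvEnergy (γ : ℝ → ℝ → ℝ × ℝ) (t : ℝ) : ℝ :=
  ∫ u in (0 : ℝ)..(2 * π), curvGS (γ · t) u ^ 2 * speed (γ · t) u

theorem curvEnergy_nonneg (γ : ℝ → ℝ → ℝ × ℝ) (t : ℝ) : 0 ≤ curvEnergy γ t :=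
  intervalIntegral.integral_nonneg two_pi_pos.le fun u _ =>
    mul_nonneg (sq_nonneg _) (speed_nonneg _ u)

theorem clen_nonneg (γ : ℝ → ℝ → ℝ × ℝ) (t : ℝ) : 0 ≤ clen γ t :=
  intervalIntegral.integral_nonneg two_pi_pos.le fun u _ => speed_nonneg _ u

theorem SmoothFamily.areaDensity {I : Set ℝ} {x y : ℝ → ℝ → ℝ} (hx : SmoothFamily I x)
    (hy : SmoothFamily I y) (hI : UniqueDiffOn ℝ I) :
    SmoothFamily I fun u t => x u t * deriv (y · t) u - y u t * deriv (x · t) u :=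
  (ContDiffOn.mul hx (hy.deriv_space hI)).sub (ContDiffOn.mul hy (hx.deriv_space hI))

theorem SmoothFamily.continuousOn_signedArea {I : Set ℝ} {γ : ℝ → ℝ → ℝ × ℝ}
    (hγ : SmoothFamily I γ) (hI : UniqueDiffOn ℝ I) : ContinuousOn (signedArea γ) I :=
  have hx : SmoothFamily I fun u t => (γ u t).1 := ContDiffOn.fst hγ
  have hy : SmoothFamily I fun u t => (γ u t).2 := ContDiffOn.snd hγ
  continuousOn_const.mul ((hx.areaDensity hy hI).continuousOn_integral _ _)

namespace RegularFamily

variable {I : Set ℝ} {γ : ℝ → ℝ → ℝ × ℝ} {t : ℝ}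

theorem mono {J : Set ℝ} (hγ : RegularFamily I γ) (hJ : J ⊆ I) : RegularFamily J γ where
  smooth := hγ.smooth.mono hJ
  deriv_ne_zero u t ht := hγ.deriv_ne_zero u t (hJ ht)

theorem smoothFamily_speed (hγ : RegularFamily I γ) (hI : UniqueDiffOn ℝ I) :
    SmoothFamily I fun u t => speed (γ · t) u :=
  have hd := hγ.smooth.deriv_space hI
  ((hd.fst.pow 2).add (hd.snd.pow 2)).sqrt
    fun p hp => (sq_add_sq_deriv_pos (hγ.deriv_ne_zero p.1 p.2 hp.2)).ne'

theorem smoothFamily_inv_speed (hγ : RegularFamily I γ) (hI : UniqueDiffOn ℝ I) :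
    SmoothFamily I fun u t => (speed (γ · t) u)⁻¹ :=
  ContDiffOn.inv (hγ.smoothFamily_speed hI)
    fun p hp => (speed_pos (hγ.deriv_ne_zero p.1 p.2 hp.2)).ne'

theorem smoothFamily_arcD (hγ : RegularFamily I γ) (hI : UniqueDiffOn ℝ I) {f : ℝ → ℝ → ℝ}
    (hf : SmoothFamily I f) : SmoothFamily I fun u t => arcD (γ · t) (f · t) u :=
  ContDiffOn.mul (hγ.smoothFamily_inv_speed hI) (hf.deriv_space hI)

theorem smoothFamily_arcDV (hγ : RegularFamily I γ) (hI : UniqueDiffOn ℝ I)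
    {F : ℝ → ℝ → ℝ × ℝ} (hF : SmoothFamily I F) :
    SmoothFamily I fun u t => arcDV (γ · t) (F · t) u :=
  ContDiffOn.smul (hγ.smoothFamily_inv_speed hI) (hF.deriv_space hI)

theorem smoothFamily_nuG (hγ : RegularFamily I γ) (hI : UniqueDiffOn ℝ I) :
    SmoothFamily I fun u t => nuG (γ · t) u := by
  have hτ := hγ.smoothFamily_arcDV hI hγ.smooth
  simp only [nuG_eq_rotate_arcDV_self]
  exact hτ.snd.prodMk hτ.fst.neg

theorem smoothFamily_curvG (hγ : RegularFamily I γ) (hI : UniqueDiffOn ℝ I) :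
    SmoothFamily I fun u t => curvG (γ · t) u :=
  have hτs := hγ.smoothFamily_arcDV hI (hγ.smoothFamily_arcDV hI hγ.smooth)
  have hν := hγ.smoothFamily_nuG hI
  (hτs.fst.mul hν.fst).add (hτs.snd.mul hν.snd)

theorem smoothFamily_curvGS (hγ : RegularFamily I γ) (hI : UniqueDiffOn ℝ I) :
    SmoothFamily I fun u t => curvGS (γ · t) u :=
  hγ.smoothFamily_arcD hI (hγ.smoothFamily_curvG hI)

theorem continuousOn_clen (hγ : RegularFamily I γ) (hI : UniqueDiffOn ℝ I) :
    ContinuousOn (clen γ) I :=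
  (hγ.smoothFamily_speed hI).continuousOn_integral _ _

theorem clen_pos (hγ : RegularFamily I γ) (hI : UniqueDiffOn ℝ I) (ht : t ∈ I) : 0 < clen γ t :=
  intervalIntegral.intervalIntegral_pos_of_pos
    (((hγ.smoothFamily_speed hI).contDiff_slice ht).continuous.intervalIntegrable _ _)
    (fun u => speed_pos (hγ.deriv_ne_zero u t ht)) two_pi_pos

theorem continuousOn_curvEnergy (hγ : RegularFamily I γ) (hI : UniqueDiffOn ℝ I) :
    ContinuousOn (curvEnergy γ) I :=
  have hdensity : SmoothFamily I fun u t => curvGS (γ · t) u ^ 2 * speed (γ · t) u :=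
    ContDiffOn.mul (ContDiffOn.pow (hγ.smoothFamily_curvGS hI) 2) (hγ.smoothFamily_speed hI)
  hdensity.continuousOn_integral _ _

theorem integral_mul_curvGSS (hγ : RegularFamily I γ) (hI : UniqueDiffOn ℝ I) (ht : t ∈ I)
    {p : ℝ} (hp : Periodic (γ · t) p) {f : ℝ → ℝ} (hf : ContDiff ℝ 1 f) (hfp : Periodic f p) :
    ∫ u in (0 : ℝ)..p, f u * curvGSS (γ · t) u * speed (γ · t) u =
      -∫ u in (0 : ℝ)..p, arcD (γ · t) f u * curvGS (γ · t) u * speed (γ · t) u :=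
  integral_mul_arcD_mul_speed (fun u => hγ.deriv_ne_zero u t ht) hf
    (((hγ.smoothFamily_curvGS hI).contDiff_slice ht).of_le (by simp)) hfp (curvGS_periodic hp)

end RegularFamily

section FirstVariation

variable {I : Set ℝ} {γ : ℝ → ℝ → ℝ × ℝ} {t : ℝ}

theorem RegularFamily.deriv_speed_time (hγ : RegularFamily I γ) (ht : t ∈ interior I) (u : ℝ) :
    deriv (fun s => speed (γ · s) u) t =
      innerP (deriv (fun v => deriv (γ v) t) u) (arcDV (γ · t) (γ · t) u) := by
  have hreg := hγ.deriv_ne_zero u t (interior_subset ht)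
  have hd := hγ.smooth.hasDerivAt_time_deriv_space ht u
  have hsq : HasDerivAt (fun s => (deriv (γ · s) u).1 ^ 2 + (deriv (γ · s) u).2 ^ 2)
      (2 * innerP (deriv (fun v => deriv (γ v) t) u) (deriv (γ · t) u)) t := by
    convert hasDerivAt_innerP hd hd using 1
    · funext s
      simp only [innerP, sq]
    · simp only [innerP]
      ring
  have hspeed : deriv (fun s => speed (γ · s) u) t =
      2 * innerP (deriv (fun v => deriv (γ v) t) u) (deriv (γ · t) u) / (2 * speed (γ · t) u) :=
    (hsq.sqrt (sq_add_sq_deriv_pos hreg).ne').deriv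
  rw [hspeed]
  have hpos := speed_pos hreg
  simp only [innerP, arcDV, Prod.smul_fst, Prod.smul_snd, smul_eq_mul]
  field_simp

namespace RegularFamily

theorem contDiff_arcDV_slice (hγ : RegularFamily I γ) (ht : t ∈ interior I) :
    ContDiff ℝ ∞ (arcDV (γ · t) (γ · t)) :=
  have h := hγ.mono interior_subset
  (h.smoothFamily_arcDV isOpen_interior.uniqueDiffOn h.smooth).contDiff_slice ht

theorem deriv_innerP_tangent (hγ : RegularFamily I γ) (ht : t ∈ interior I) (u : ℝ) :
    deriv (fun v => innerP (deriv (γ v) t) (arcDV (γ · t) (γ · t) v)) u =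
      innerP (deriv (γ u) t) (nuG (γ · t) u) * curvG (γ · t) u * speed (γ · t) u +
        deriv (fun s => speed (γ · s) u) t := by
  have hτ : DifferentiableAt ℝ (arcDV (γ · t) (γ · t)) u :=
    (hγ.contDiff_arcDV_slice ht).differentiable (by simp) u
  rw [(hasDerivAt_innerP (hγ.smooth.deriv_time.hasDerivAt_slice ht u) hτ.hasDerivAt).deriv,
    deriv_arcDV_self (.of_forall fun v => hγ.deriv_ne_zero v t (interior_subset ht)) hτ,
    hγ.deriv_speed_time ht]
  simp only [innerP, Prod.smul_fst, Prod.smul_snd, smul_eq_mul]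
  ring

theorem hasDerivAt_clen (hγ : RegularFamily I γ) (hper : ∀ s ∈ I, Periodic (γ · s) (2 * π))
    (ht : t ∈ interior I) :
    HasDerivAt (clen γ) (∫ u in (0 : ℝ)..(2 * π),
      -(innerP (deriv (γ u) t) (nuG (γ · t) u) * curvG (γ · t) u * speed (γ · t) u)) t := by
  have hinner := hγ.mono interior_subset
  have hslice := hper t (interior_subset ht)
  have hvel := hγ.smooth.deriv_time.contDiff_slice ht
  have hτ := hγ.contDiff_arcDV_slice ht
  have hflux : ContDiff ℝ ∞ fun u => innerP (deriv (γ u) t) (arcDV (γ · t) (γ · t) u) :=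
    (hvel.fst.mul hτ.fst).add (hvel.snd.mul hτ.snd)
  have hspeed := hinner.smoothFamily_speed isOpen_interior.uniqueDiffOn
  refine hspeed.hasDerivAt_integral_of_periodic_flux (by rwa [interior_interior])
    (hflux.of_le (by simp)) (fun u => ?_) fun u => ?_
  · simp only [periodic_deriv_time hper ht u, arcDV_periodic hslice hslice u]
  · rw [hγ.deriv_innerP_tangent ht u]
    ring

end RegularFamily

theorem SmoothFamily.hasDerivAt_integral_areaDensity {x y : ℝ → ℝ → ℝ} {p : ℝ}
    (hx : SmoothFamily I x) (hy : SmoothFamily I y) (hxp : ∀ s ∈ I, Periodic (x · s) p)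
    (hyp : ∀ s ∈ I, Periodic (y · s) p) (ht : t ∈ interior I) :
    HasDerivAt
      (fun s => ∫ u in (0 : ℝ)..p, (x u s * deriv (y · s) u - y u s * deriv (x · s) u))
      (∫ u in (0 : ℝ)..p,
        2 * (deriv (x u) t * deriv (y · t) u - deriv (y u) t * deriv (x · t) u)) t := by
  have htI : t ∈ I := interior_subset ht
  have hdensity := areaDensity (hx.mono interior_subset) (hy.mono interior_subset)
    isOpen_interior.uniqueDiffOn
  have hflux : ContDiff ℝ ∞ fun u => x u t * deriv (y u) t - y u t * deriv (x u) t :=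
    ((hx.contDiff_slice htI).mul (hy.deriv_time.contDiff_slice ht)).sub
      ((hy.contDiff_slice htI).mul (hx.deriv_time.contDiff_slice ht))
  refine hdensity.hasDerivAt_integral_of_periodic_flux (by rwa [interior_interior])
    (hflux.of_le (by simp)) (fun u => ?_) fun u => ?_
  · simp only [hxp t htI u, hyp t htI u, periodic_deriv_time hxp ht u,
      periodic_deriv_time hyp ht u]
  have hFt := ((hx.hasDerivAt_time ht u).fun_mul (hy.hasDerivAt_time_deriv_space ht u)).fun_sub
    ((hy.hasDerivAt_time ht u).fun_mul (hx.hasDerivAt_time_deriv_space ht u))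
  have hPu := ((hx.hasDerivAt_slice htI u).fun_mul (hy.deriv_time.hasDerivAt_slice ht u)).fun_sub
    ((hy.hasDerivAt_slice htI u).fun_mul (hx.deriv_time.hasDerivAt_slice ht u))
  rw [hFt.deriv, hPu.deriv]
  ring

theorem RegularFamily.hasDerivAt_signedArea (hγ : RegularFamily I γ)
    (hper : ∀ s ∈ I, Periodic (γ · s) (2 * π)) (ht : t ∈ interior I) :
    HasDerivAt (signedArea γ)
      (∫ u in (0 : ℝ)..(2 * π), innerP (deriv (γ u) t) (nuG (γ · t) u) * speed (γ · t) u) t := by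
  have hx : SmoothFamily I fun u t => (γ u t).1 := ContDiffOn.fst hγ.smooth
  have hy : SmoothFamily I fun u t => (γ u t).2 := ContDiffOn.snd hγ.smooth
  have hdensity := hx.hasDerivAt_integral_areaDensity hy
    (fun s hs u => congrArg Prod.fst (hper s hs u))
    (fun s hs u => congrArg Prod.snd (hper s hs u)) ht
  refine (hdensity.const_mul (1 / 2)).congr_deriv ?_
  rw [← intervalIntegral.integral_const_mul]
  refine intervalIntegral.integral_congr fun u _ => ?_
  have hspace := hγ.smooth.hasDerivAt_slice (interior_subset ht) u
  have htime := hγ.smooth.hasDerivAt_time ht u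
  have hpos := speed_pos (hγ.deriv_ne_zero u t (interior_subset ht))
  simp only [(hasDerivAt_fst hspace).deriv, (hasDerivAt_snd hspace).deriv,
    (hasDerivAt_fst htime).deriv, (hasDerivAt_snd htime).deriv, innerP, nuG]
  field_simp
  ring

end FirstVariation

/-- The curve diffusion flow `∂_t γ = -κ_ss ν` of closed regular plane curves `γ(·, t)`, `t ∈ I`,
parametrised with period `2π`. The equation is imposed at interior times only. -/
structure CurveDiffusionFlow (I : Set ℝ) (γ : ℝ → ℝ → ℝ × ℝ) : Prop extends RegularFamily I γ where
  periodic : ∀ t ∈ I, Periodic (γ · t) (2 * π)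
  velocity : ∀ u, ∀ t ∈ interior I, deriv (γ u) t = (-curvGSS (γ · t) u) • nuG (γ · t) u

namespace CurveDiffusionFlow

variable {I : Set ℝ} {γ : ℝ → ℝ → ℝ × ℝ} {s t : ℝ}

theorem innerP_velocity_normal (h : CurveDiffusionFlow I γ) (ht : t ∈ interior I) (u : ℝ) :
    innerP (deriv (γ u) t) (nuG (γ · t) u) = -curvGSS (γ · t) u := by
  have hunit := innerP_arcDV_self (h.deriv_ne_zero u t (interior_subset ht))
  rw [h.velocity u t ht, nuG_eq_rotate_arcDV_self]
  simp only [innerP, Prod.smul_fst, Prod.smul_snd, smul_eq_mul] at hunit ⊢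
  linear_combination -curvGSS (γ · t) u * hunit

theorem hasDerivAt_clen (h : CurveDiffusionFlow I γ) (hI : UniqueDiffOn ℝ I)
    (ht : t ∈ interior I) : HasDerivAt (clen γ) (-curvEnergy γ t) t := by
  have htI := interior_subset ht
  refine (h.toRegularFamily.hasDerivAt_clen h.periodic ht).congr_deriv ?_
  calc ∫ u in (0 : ℝ)..(2 * π),
        -(innerP (deriv (γ u) t) (nuG (γ · t) u) * curvG (γ · t) u * speed (γ · t) u)
      = ∫ u in (0 : ℝ)..(2 * π), curvG (γ · t) u * curvGSS (γ · t) u * speed (γ · t) u :=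
        intervalIntegral.integral_congr fun u _ => by
          simp only [h.innerP_velocity_normal ht u]
          ring
    _ = -∫ u in (0 : ℝ)..(2 * π), curvGS (γ · t) u * curvGS (γ · t) u * speed (γ · t) u :=
        h.integral_mul_curvGSS hI htI (h.periodic t htI)
          (((h.smoothFamily_curvG hI).contDiff_slice htI).of_le (by simp))
          (curvG_periodic (h.periodic t htI))
    _ = -curvEnergy γ t := by simp only [curvEnergy, sq]

theorem hasDerivAt_signedArea (h : CurveDiffusionFlow I γ) (hI : UniqueDiffOn ℝ I)
    (ht : t ∈ interior I) : HasDerivAt (signedArea γ) 0 t := by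
  refine (h.toRegularFamily.hasDerivAt_signedArea h.periodic ht).congr_deriv ?_
  simpa [h.innerP_velocity_normal ht, arcD] using
    h.integral_mul_curvGSS hI (interior_subset ht) (h.periodic t (interior_subset ht))
      (contDiff_const (c := 1)) fun _ => rfl

theorem signedArea_eq (h : CurveDiffusionFlow I γ) (hI : I.OrdConnected) (hI' : UniqueDiffOn ℝ I)
    (hs : s ∈ I) (ht : t ∈ I) : signedArea γ t = signedArea γ s :=
  eq_of_hasDerivAt_zero_interior hI (h.smooth.continuousOn_signedArea hI')
    (fun _ hr => h.hasDerivAt_signedArea hI' hr) hs ht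

theorem hasDerivAt_isoRatio (h : CurveDiffusionFlow I γ) (hI : UniqueDiffOn ℝ I)
    (ht : t ∈ interior I) (hA : signedArea γ t ≠ 0) :
    HasDerivAt (isoRatio γ) (-(2 / clen γ t * curvEnergy γ t) * isoRatio γ t) t := by
  refine (((h.hasDerivAt_clen hI ht).pow 2).div
    ((h.hasDerivAt_signedArea hI ht).const_mul (4 * π)) (by positivity)).congr_deriv ?_
  simp only [isoRatio]
  field_simp
  ring

theorem isoRatio_eq (h : CurveDiffusionFlow I γ) (hI : I.OrdConnected) (hI' : UniqueDiffOn ℝ I)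
    (hs : s ∈ I) (ht : t ∈ I) (hA : signedArea γ s ≠ 0) :
    isoRatio γ t = isoRatio γ s * exp (-∫ τ in s..t, 2 / clen γ τ * curvEnergy γ τ) := by
  have hA' : ∀ r ∈ I, signedArea γ r ≠ 0 := fun r hr => h.signedArea_eq hI hI' hs hr ▸ hA
  have hrate : ContinuousOn (fun τ => -(2 / clen γ τ * curvEnergy γ τ)) I :=
    ((continuousOn_const.div (h.continuousOn_clen hI') fun _ hr => (h.clen_pos hI' hr).ne').mul
      (h.continuousOn_curvEnergy hI')).neg
  have hratio : ContinuousOn (isoRatio γ) I :=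
    ((h.continuousOn_clen hI').pow 2).div
      (continuousOn_const.mul (h.smooth.continuousOn_signedArea hI'))
      fun r hr => mul_ne_zero (by positivity) (hA' r hr)
  rw [eq_exp_integral_smul_of_hasDerivAt_interior hI hratio hrate
    (fun r hr => h.hasDerivAt_isoRatio hI' hr (hA' r (interior_subset hr))) hs ht,
    intervalIntegral.integral_neg, smul_eq_mul, mul_comm]

theorem abs_isoRatio_antitoneOn (h : CurveDiffusionFlow I γ) (hI : I.OrdConnected)
    (hI' : UniqueDiffOn ℝ I) (hA : ∀ t ∈ I, signedArea γ t ≠ 0) :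
    AntitoneOn (fun t => |isoRatio γ t|) I := fun s hs t ht hst => by
  have hdecay : 0 ≤ ∫ τ in s..t, 2 / clen γ τ * curvEnergy γ τ :=
    intervalIntegral.integral_nonneg hst fun τ _ =>
      mul_nonneg (div_nonneg zero_le_two (clen_nonneg γ τ)) (curvEnergy_nonneg γ τ)
  simp only [h.isoRatio_eq hI hI' hs ht (hA s hs), abs_mul, abs_exp]
  exact mul_le_of_le_one_right (abs_nonneg _) (exp_le_one_iff.2 (neg_nonpos.2 hdecay))

end CurveDiffusionFlow

theorem curve_diffusion_isoperimetric_ratio_general {I : Set ℝ} (hI : I.OrdConnected)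
    (hI' : UniqueDiffOn ℝ I) {γ : ℝ → ℝ → ℝ × ℝ} (h : CurveDiffusionFlow I γ) {t₀ : ℝ}
    (ht₀ : t₀ ∈ I) (hA : signedArea γ t₀ ≠ 0) :
    (∀ t ∈ I, isoRatio γ t =
        isoRatio γ t₀ * exp (-∫ τ in t₀..t, 2 / clen γ τ * curvEnergy γ τ)) ∧
      AntitoneOn (fun t => |isoRatio γ t|) I :=
  ⟨fun _ ht => h.isoRatio_eq hI hI' ht₀ ht hA, h.abs_isoRatio_antitoneOn hI hI' fun _ ht =>
    h.signedArea_eq hI hI' ht₀ ht ▸ hA⟩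

/-- under the curve diffusion flow of closed plane curves with nonzero
signed enclosed area, the signed isoperimetric ratio satisfies
`I(t) = I(0) exp(−∫₀^t (2/L) ∫ κ_s² dℓ dτ)`; in particular `|I|` is nonincreasing. -/
theorem curve_diffusion_isoperimetric_ratio
    (T : ℝ) (hT : 0 < T) (γ : ℝ → ℝ → ℝ × ℝ)
    (hsmooth : ContDiffOn ℝ (⊤ : ℕ∞) (fun p : ℝ × ℝ => γ p.1 p.2) (Set.univ ×ˢ Set.Ico 0 T))
    (hper : ∀ u : ℝ, ∀ t ∈ Set.Ico (0:ℝ) T, γ (u + 2 * Real.pi) t = γ u t)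
    (hreg : ∀ u : ℝ, ∀ t ∈ Set.Ico (0:ℝ) T, deriv (fun u' => γ u' t) u ≠ 0)
    (hflow : ∀ u : ℝ, ∀ t ∈ Set.Ico (0:ℝ) T,
      deriv (fun t' => γ u t') t
        = (- curvGSS (fun u' => γ u' t) u) • nuG (fun u' => γ u' t) u)
    (hA : signedArea γ 0 ≠ 0) :
    (∀ t ∈ Set.Ico (0:ℝ) T,
        isoRatio γ t = isoRatio γ 0 *
          Real.exp (- ∫ τ in (0:ℝ)..t,
            (2 / clen γ τ) * ∫ u in (0:ℝ)..(2 * Real.pi),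
              (curvGS (fun u' => γ u' τ) u) ^ 2 * speed (fun u' => γ u' τ) u)) ∧
      AntitoneOn (fun t => |isoRatio γ t|) (Set.Ico 0 T) := by
  have h : CurveDiffusionFlow (Set.Ico 0 T) γ :=
    ⟨⟨hsmooth, hreg⟩, fun t ht u => hper u t ht, fun u t ht => hflow u t (interior_subset ht)⟩
  exact curve_diffusion_isoperimetric_ratio_general ordConnected_Ico (uniqueDiffOn_Ico 0 T) h
    ⟨le_rfl, hT⟩ hA
end

section
/- Let γ₀ : ℝ → ℝ² be a smooth closed regular plane curve parametrised by arc length with unit normal ν₀ and curvature κ₀, and suppose there is a constant K ∈ ℝ such that κ₀''(s) = −K ⟨γ₀(s), ν₀(s)⟩ for all s. Fix ρ > 0 and set f(t) = (ρ⁴ + 4Kt)^{1/4}. Then for all t with ρ⁴ + 4Kt > 0, the family γ(u,t) := f(t) γ₀(u) satisfies the curve diffusion flow equation in normal direction: ⟨∂_t γ(u,t), ν(u,t)⟩ = −κ_ss(u,t), where ν, κ, and the arc-length derivative are those of the curve γ(·,t). -/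
open Real MeasureTheory Filter

/-- Unit normal `ν₀ = (y', -x')` of a plane curve parametrised by arc length. -/
noncomputable def nuA (γ : ℝ → ℝ × ℝ) (s : ℝ) : ℝ × ℝ :=
  ((deriv γ s).2, -(deriv γ s).1)

/-- Curvature `κ₀ = ⟨γ'', ν₀⟩` of a plane curve parametrised by arc length. -/
noncomputable def curvA (γ : ℝ → ℝ × ℝ) (s : ℝ) : ℝ :=
  innerP (deriv (deriv γ) s) (nuA γ s)

/-!
Scaling a curve by `c` multiplies its speed by `|c|`, hence divides every arc-length derivative by
`|c|`; so `κ_ss` scales by `|c|⁻³`, while the normal is preserved for `c > 0`. The family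
`f(t) γ(u)` has normal velocity `f'(t) ⟨γ, ν⟩`, and `κ_ss = -K ⟨γ, ν⟩` turns the flow equation into
the ordinary differential equation `f' = K / f³`, which is solved by `f(t) = (a + 4Kt)^{1/4}`.
-/

lemma innerP_smul_left (c : ℝ) (a b : ℝ × ℝ) : innerP (c • a) b = c * innerP a b := by
  simp only [innerP, Prod.smul_fst, Prod.smul_snd, smul_eq_mul]
  ring

lemma innerP_smul_right (c : ℝ) (a b : ℝ × ℝ) : innerP a (c • b) = c * innerP a b := by
  simp only [innerP, Prod.smul_fst, Prod.smul_snd, smul_eq_mul]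
  ring

section Scaling

variable (γ : ℝ → ℝ × ℝ) (c : ℝ)

lemma speed_const_smul (u : ℝ) : speed (fun v => c • γ v) u = |c| * speed γ u := by
  simp only [speed, deriv_fun_const_smul_field, Prod.smul_fst, Prod.smul_snd, smul_eq_mul,
    mul_pow, ← mul_add]
  rw [Real.sqrt_mul (sq_nonneg c), Real.sqrt_sq_eq_abs]

lemma nuG_const_smul (u : ℝ) :
    nuG (fun v => c • γ v) u = (SignType.sign c : ℝ) • nuG γ u := by
  have sign_eq : (SignType.sign c : ℝ) = c / |c| := by
    rcases eq_or_ne c 0 with rfl | hc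
    · simp
    · rw [eq_div_iff (abs_ne_zero.mpr hc), sign_mul_abs]
  simp only [nuG, speed_const_smul, deriv_fun_const_smul_field, Prod.smul_fst, Prod.smul_snd,
    Prod.smul_mk, smul_eq_mul, sign_eq, neg_div, mul_neg, mul_div_mul_comm]

lemma arcD_smul_curve (g : ℝ → ℝ) (u : ℝ) :
    arcD (fun v => c • γ v) g u = |c|⁻¹ * arcD γ g u := by
  rw [arcD, arcD, speed_const_smul, mul_inv, mul_assoc]

lemma arcDV_smul_curve (F : ℝ → ℝ × ℝ) (u : ℝ) :
    arcDV (fun v => c • γ v) F u = |c|⁻¹ • arcDV γ F u := by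
  rw [arcDV, arcDV, speed_const_smul, mul_inv, mul_smul]

lemma arcD_const_mul (g : ℝ → ℝ) (u : ℝ) : arcD γ (fun v => c * g v) u = c * arcD γ g u := by
  rw [arcD, arcD, deriv_const_mul_field, mul_left_comm]

lemma arcDV_const_smul (F : ℝ → ℝ × ℝ) (u : ℝ) :
    arcDV γ (fun v => c • F v) u = c • arcDV γ F u := by
  rw [arcDV, arcDV, deriv_fun_const_smul_field, smul_comm]

lemma curvG_const_smul (u : ℝ) : curvG (fun v => c • γ v) u = |c|⁻¹ * curvG γ u := by
  have tangent : arcDV (fun v => c • γ v) (fun v => c • γ v)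
      = fun v => |c|⁻¹ • c • arcDV γ γ v := by
    funext v
    rw [arcDV_smul_curve, arcDV_const_smul]
  -- This includes `c = 0`, where `0⁻¹ = 0`.
  have abs_inv_mul : |c|⁻¹ * |c|⁻¹ * |c| = |c|⁻¹ := by
    simpa only [inv_inv] using mul_self_mul_inv |c|⁻¹
  calc curvG (fun v => c • γ v) u
      = |c|⁻¹ * |c|⁻¹ * (c * SignType.sign c) * curvG γ u := by
        simp only [curvG, tangent, arcDV_smul_curve, arcDV_const_smul, nuG_const_smul,
          innerP_smul_left, innerP_smul_right]
        ring
    _ = |c|⁻¹ * curvG γ u := by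
        rw [self_mul_sign, abs_inv_mul]

lemma curvGS_const_smul (u : ℝ) :
    curvGS (fun v => c • γ v) u = (|c| ^ 2)⁻¹ * curvGS γ u := by
  rw [curvGS, funext (curvG_const_smul γ c), arcD_smul_curve, arcD_const_mul, ← curvGS]
  ring

lemma curvGSS_const_smul (u : ℝ) :
    curvGSS (fun v => c • γ v) u = (|c| ^ 3)⁻¹ * curvGSS γ u := by
  rw [curvGSS, funext (curvGS_const_smul γ c), arcD_smul_curve, arcD_const_mul, ← curvGSS]
  ring

end Scaling

section ArcLength

variable {γ : ℝ → ℝ × ℝ} {u : ℝ}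

lemma speed_eq_one_iff : speed γ u = 1 ↔ (deriv γ u).1 ^ 2 + (deriv γ u).2 ^ 2 = 1 :=
  Real.sqrt_eq_one

lemma nuG_eq_nuA (h : speed γ u = 1) : nuG γ u = nuA γ u := by
  simp only [nuG, nuA, h, div_one]

lemma arcD_eq_deriv (h : ∀ s, speed γ s = 1) (g : ℝ → ℝ) : arcD γ g = deriv g := by
  funext s
  rw [arcD, h, inv_one, one_mul]

lemma arcDV_eq_deriv (h : ∀ s, speed γ s = 1) (F : ℝ → ℝ × ℝ) : arcDV γ F = deriv F := by
  funext s
  rw [arcDV, h, inv_one, one_smul]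

lemma curvG_eq_curvA (h : ∀ s, speed γ s = 1) : curvG γ = curvA γ := by
  funext s
  rw [curvG, curvA, arcDV_eq_deriv h, arcDV_eq_deriv h, nuG_eq_nuA (h s)]

lemma curvGSS_eq_deriv_deriv_curvA (h : ∀ s, speed γ s = 1) :
    curvGSS γ = deriv (deriv (curvA γ)) := by
  have curvGS_eq : curvGS γ = deriv (curvA γ) := by
    rw [← curvG_eq_curvA h, ← arcD_eq_deriv h]
    rfl
  rw [← curvGS_eq, ← arcD_eq_deriv h]
  rfl

end ArcLength

lemma innerP_deriv_smul_nuG {f : ℝ → ℝ} {f' t : ℝ} (hf : HasDerivAt f f' t)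
    (γ : ℝ → ℝ × ℝ) (u : ℝ) :
    innerP (deriv (fun t' => f t' • γ u) t) (nuG (fun u' => f t • γ u') u)
      = SignType.sign (f t) * (f' * innerP (γ u) (nuG γ u)) := by
  rw [(hf.smul_const (γ u)).deriv, nuG_const_smul, innerP_smul_right, innerP_smul_left]

lemma hasDerivAt_fourth_root {g : ℝ → ℝ} {g' t : ℝ} (hg : HasDerivAt g g' t) (ht : 0 < g t) :
    HasDerivAt (fun s => g s ^ ((1 : ℝ) / 4)) (g' / (4 * (g t ^ ((1 : ℝ) / 4)) ^ 3)) t := by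
  have cube_inv : g t ^ ((1 : ℝ) / 4 - 1) = ((g t ^ ((1 : ℝ) / 4)) ^ 3)⁻¹ := by
    rw [← Real.rpow_mul_natCast ht.le, ← Real.rpow_neg ht.le]
    norm_num
  convert hg.rpow_const (p := (1 : ℝ) / 4) (Or.inl ht.ne') using 1
  rw [cube_inv]
  ring

theorem homothetic_solution_of_shrinker_equation_general
    (γ : ℝ → ℝ × ℝ) (hsmooth : ContDiff ℝ 4 γ) (hreg : ∀ u, deriv γ u ≠ 0) (K : ℝ)
    (hself : ∀ u, curvGSS γ u = -K * innerP (γ u) (nuG γ u))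
    (a : ℝ) (f : ℝ → ℝ) (hf : ∀ t, f t = (a + 4 * K * t) ^ ((1 : ℝ) / 4)) :
    ∀ t : ℝ, 0 < a + 4 * K * t →
      ∀ u : ℝ,
        innerP (deriv (fun t' => f t' • γ u) t) (nuG (fun u' => f t • γ u') u)
          = - curvGSS (fun u' => f t • γ u') u := by
  intro t ht u
  have f_pos : 0 < f t := by
    rw [hf]
    exact Real.rpow_pos_of_pos ht _
  have f_ode : HasDerivAt f (4 * K / (4 * f t ^ 3)) t := by
    rw [hf t, funext hf]
    exact hasDerivAt_fourth_root ((hasDerivAt_const_mul (4 * K)).const_add a) ht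
  rw [innerP_deriv_smul_nuG f_ode, sign_pos f_pos, SignType.coe_one, curvGSS_const_smul,
    abs_of_pos f_pos, hself]
  ring

/-- if the closed arc-length curve `γ₀` satisfies the shrinker equation
`κ₀'' = −K ⟨γ₀, ν₀⟩`, then with `f(t) = (ρ⁴ + 4Kt)^{1/4}` the homothetic family
`γ(u,t) = f(t) γ₀(u)` satisfies the curve diffusion flow equation in the normal direction. -/
theorem homothetic_solution_of_shrinker_equation
    (γ₀ : ℝ → ℝ × ℝ) (L : ℝ) (hL : 0 < L)
    (hsmooth : ContDiff ℝ (⊤ : ℕ∞) γ₀)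
    (hunit : ∀ s, (deriv γ₀ s).1 ^ 2 + (deriv γ₀ s).2 ^ 2 = 1)
    (hper : ∀ s, γ₀ (s + L) = γ₀ s)
    (K : ℝ)
    (hself : ∀ s, deriv (deriv (curvA γ₀)) s = -K * innerP (γ₀ s) (nuA γ₀ s))
    (ρ : ℝ) (hρ : 0 < ρ)
    (f : ℝ → ℝ) (hf : ∀ t, f t = (ρ ^ 4 + 4 * K * t) ^ ((1:ℝ)/4)) :
    ∀ t : ℝ, 0 < ρ ^ 4 + 4 * K * t →
      ∀ u : ℝ,
        innerP (deriv (fun t' => f t' • γ₀ u) t) (nuG (fun u' => f t • γ₀ u') u)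
          = - curvGSS (fun u' => f t • γ₀ u') u := by
  have speed_one (s : ℝ) : speed γ₀ s = 1 := speed_eq_one_iff.mpr (hunit s)
  exact homothetic_solution_of_shrinker_equation_general γ₀ (contDiff_infty.mp hsmooth 4)
    (fun s hs => by simpa [hs] using hunit s) K
    (fun s => by rw [curvGSS_eq_deriv_deriv_curvA speed_one, nuG_eq_nuA (speed_one s), hself])
    (ρ ^ 4) f hf
end

section
/- Let γ : ℝ → ℝ² be a smooth regular plane curve parametrised by arc length with curvature κ, and let V ∈ ℝ² satisfy −κ''(s) = ⟨V, ν(s)⟩ for all s. Suppose that for all sequences (p_i) with p_i → −∞ and (q_i) with q_i → +∞, one has (κ(q_i)κ'(q_i) + ⟨V, γ'(q_i)⟩) − (κ(p_i)κ'(p_i) + ⟨V, γ'(p_i)⟩) → 0 as i → ∞. Then κ' ≡ 0, i.e. κ is constant; if moreover γ is not periodic (there is no P > 0 with γ(s+P) = γ(s) for all s), then γ is a straight line: γ(s) = γ(0) + s γ'(0). -/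
open Real MeasureTheory Filter

/-!
Along a translator the flux `κ κ' + ⟨V, γ'⟩` has derivative `κ'²`, because the Frenet equation
`γ'' = κ ν` and the translator equation cancel the remaining terms. The flux is therefore monotone,
and a monotone function whose increments vanish in the limit along intervals exhausting the line is
constant. So `κ' = 0`, and the Frenet equation becomes `γ'' = c J γ'` with `J` a quarter turn. If
`c ≠ 0`, then `γ` moves on a circle and is periodic; if `c = 0`, then `γ` is affine.
-/

theorem eq_of_monotone_of_tendsto_sub {α G ι : Type*} [Preorder α] [AddCommGroup G]
    [PartialOrder G] [IsOrderedAddMonoid G] [TopologicalSpace G] [ClosedIciTopology G]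
    {l : Filter ι} [l.NeBot] {f : α → G} {p q : ι → α} (hf : Monotone f)
    (hp : Tendsto p l atBot) (hq : Tendsto q l atTop)
    (hlim : Tendsto (fun i => f (q i) - f (p i)) l (nhds 0)) (a b : α) : f a = f b := by
  have hle (a b : α) : f a ≤ f b := by
    refine sub_nonpos.1 (ge_of_tendsto hlim ?_)
    filter_upwards [hp.eventually_le_atBot b, hq.eventually_ge_atTop a] with i hpi hqi
    exact sub_le_sub (hf hqi) (hf hpi)
  exact le_antisymm (hle a b) (hle b a)

section LinearODE

variable {E : Type*} [NormedAddCommGroup E] [NormedSpace ℝ E] {f : ℝ → E}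

theorem eq_of_hasDerivAt_zero (hf : ∀ s, HasDerivAt f 0 s) (s t : ℝ) : f s = f t :=
  is_const_of_deriv_eq_zero (fun r => (hf r).differentiableAt) (fun r => (hf r).deriv) s t

theorem eq_add_smul_of_hasDerivAt_const {v : E} (hf : ∀ s, HasDerivAt f v s) (s : ℝ) :
    f s = f 0 + s • v := by
  have hconst (t : ℝ) : HasDerivAt (fun r => f r - r • v) 0 t := by
    refine ((hf t).sub ((hasDerivAt_id t).smul_const v)).congr_deriv ?_
    rw [one_smul, sub_self]
  have h := eq_of_hasDerivAt_zero hconst s 0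
  rwa [zero_smul, sub_zero, sub_eq_iff_eq_add] at h

variable {J : E →L[ℝ] E} {c : ℝ}

theorem eq_cos_smul_add_sin_smul_of_hasDerivAt (hJ : ∀ x, J (J x) = -x)
    (hf : ∀ s, HasDerivAt f (c • J (f s)) s) (s : ℝ) :
    f s = cos (c * s) • f 0 + sin (c * s) • J (f 0) := by
  -- Rotating `f s` back by the angle `c * s` yields a constant.
  have hback : cos (c * s) • f s - sin (c * s) • J (f s) = f 0 := by
    have hconst (t : ℝ) :
        HasDerivAt (fun r => cos (c * r) • f r - sin (c * r) • J (f r)) 0 t := by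
      have hlin : HasDerivAt (fun r => c * r) c t := hasDerivAt_const_mul c
      have hJf : HasDerivAt (fun r => J (f r)) (J (c • J (f t))) t :=
        J.hasFDerivAt.comp_hasDerivAt t (hf t)
      refine ((hlin.cos.smul (hf t)).sub (hlin.sin.smul hJf)).congr_deriv ?_
      simp only [map_smul, hJ]
      module
    simpa using eq_of_hasDerivAt_zero hconst s 0
  have hbackJ : cos (c * s) • J (f s) + sin (c * s) • f s = J (f 0) := by
    simpa [hJ] using congrArg J hback
  calc f s = (sin (c * s) ^ 2 + cos (c * s) ^ 2) • f s := by rw [sin_sq_add_cos_sq, one_smul]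
    _ = cos (c * s) • (cos (c * s) • f s - sin (c * s) • J (f s)) +
        sin (c * s) • (cos (c * s) • J (f s) + sin (c * s) • f s) := by module
    _ = cos (c * s) • f 0 + sin (c * s) • J (f 0) := by rw [hback, hbackJ]

theorem periodic_of_hasDerivAt_smul (hJ : ∀ x, J (J x) = -x) (hc : c ≠ 0)
    (hf : ∀ s, HasDerivAt f (c • J (f s)) s) : Function.Periodic f (2 * π / c) := by
  intro s
  have hangle : c * (s + 2 * π / c) = c * s + 2 * π := by field_simp
  rw [eq_cos_smul_add_sin_smul_of_hasDerivAt hJ hf, hangle, cos_add_two_pi, sin_add_two_pi,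
    ← eq_cos_smul_add_sin_smul_of_hasDerivAt hJ hf]

theorem periodic_of_hasDerivAt_deriv_smul (hJ : ∀ x, J (J x) = -x) (hc : c ≠ 0)
    (hf : Differentiable ℝ f) (hf' : ∀ s, HasDerivAt (deriv f) (c • J (deriv f s)) s) :
    Function.Periodic f (2 * π / c) := by
  obtain ⟨w, hw⟩ : ∃ w, ∀ s, deriv f s = c • J (f s) + w := by
    have hconst (t : ℝ) : HasDerivAt (fun r => deriv f r - c • J (f r)) 0 t := by
      have hJf : HasDerivAt (fun r => J (f r)) (J (deriv f t)) t :=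
        J.hasFDerivAt.comp_hasDerivAt t (hf t).hasDerivAt
      exact ((hf' t).sub (hJf.const_smul c)).congr_deriv (sub_self _)
    exact ⟨_, fun s => sub_eq_iff_eq_add'.1 (eq_of_hasDerivAt_zero hconst s 0)⟩
  -- The first-order equation `f' = c J f + w` is a rotation about `c⁻¹ J w`.
  have hcenter (s : ℝ) :
      HasDerivAt (fun r => f r - c⁻¹ • J w) (c • J (f s - c⁻¹ • J w)) s := by
    refine ((hf s).hasDerivAt.sub_const _).congr_deriv ?_
    simp [hw, hJ, smul_inv_smul₀ hc]
  exact fun s => sub_left_injective (periodic_of_hasDerivAt_smul hJ hc hcenter s)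

end LinearODE

/-- The clockwise quarter turn `J (x, y) = (y, -x)` of the plane, for which `ν = J γ'`. -/
def clockwiseTurn : ℝ × ℝ →L[ℝ] ℝ × ℝ :=
  (ContinuousLinearMap.snd ℝ ℝ ℝ).prod (-ContinuousLinearMap.fst ℝ ℝ ℝ)

theorem clockwiseTurn_clockwiseTurn (x : ℝ × ℝ) : clockwiseTurn (clockwiseTurn x) = -x := rfl

theorem eq_innerP_clockwiseTurn_smul {t w : ℝ × ℝ} (ht : t.1 ^ 2 + t.2 ^ 2 = 1)
    (hw : innerP w t = 0) : w = innerP w (clockwiseTurn t) • clockwiseTurn t := by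
  simp only [innerP] at hw
  ext <;> simp only [innerP, clockwiseTurn, ContinuousLinearMap.prod_apply,
    ContinuousLinearMap.coe_snd', neg_apply, ContinuousLinearMap.coe_fst',
    Prod.smul_mk, smul_eq_mul]
  · linear_combination (-w.1) * ht + t.1 * hw
  · linear_combination (-w.2) * ht + t.2 * hw

theorem innerP_eq_zero_of_hasDerivAt_of_unit {T : ℝ → ℝ × ℝ} {T' : ℝ × ℝ} {s : ℝ}
    (hT : HasDerivAt T T' s) (hunit : ∀ r, (T r).1 ^ 2 + (T r).2 ^ 2 = 1) :
    innerP T' (T s) = 0 := by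
  have hx : HasDerivAt (fun r => (T r).1) T'.1 s := hT.fst
  have hy : HasDerivAt (fun r => (T r).2) T'.2 s := hT.snd
  have hconst : HasDerivAt (fun r => (T r).1 ^ 2 + (T r).2 ^ 2) 0 s := by
    simpa only [hunit] using hasDerivAt_const s (1 : ℝ)
  have h := ((hx.pow 2).add (hy.pow 2)).unique hconst
  simp only [Nat.cast_ofNat, Nat.add_one_sub_one, pow_one] at h
  simp only [innerP]
  linear_combination h / 2

section Curve

variable {γ : ℝ → ℝ × ℝ}

theorem contDiff_curvA {n : WithTop ℕ∞} (hγ : ContDiff ℝ (n + 2) γ) :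
    ContDiff ℝ n (curvA γ) := by
  have hγ' : ContDiff ℝ (n + 1) (deriv γ) :=
    ContDiff.deriv' (by rwa [add_assoc, one_add_one_eq_two])
  have hT : ContDiff ℝ n (deriv γ) := hγ'.of_le le_self_add
  have hT' : ContDiff ℝ n (deriv (deriv γ)) := hγ'.deriv'
  exact (hT'.fst.mul hT.snd).add (hT'.snd.mul hT.fst.neg)

theorem hasDerivAt_deriv_of_unit_speed {s : ℝ} (hγ' : DifferentiableAt ℝ (deriv γ) s)
    (hunit : ∀ r, (deriv γ r).1 ^ 2 + (deriv γ r).2 ^ 2 = 1) :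
    HasDerivAt (deriv γ) (curvA γ s • nuA γ s) s :=
  hγ'.hasDerivAt.congr_deriv <|
    eq_innerP_clockwiseTurn_smul (hunit s)
      (innerP_eq_zero_of_hasDerivAt_of_unit hγ'.hasDerivAt hunit)

/-- The flux `κ κ' + ⟨V, γ'⟩` of a curve in the direction `V`, the quantity whose increments the
decay condition controls. -/
noncomputable def translatorFlux (γ : ℝ → ℝ × ℝ) (V : ℝ × ℝ) (s : ℝ) : ℝ :=
  curvA γ s * deriv (curvA γ) s + innerP V (deriv γ s)

theorem hasDerivAt_translatorFlux {V : ℝ × ℝ} {s : ℝ} (hγ' : DifferentiableAt ℝ (deriv γ) s)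
    (hκ : DifferentiableAt ℝ (curvA γ) s) (hκ' : DifferentiableAt ℝ (deriv (curvA γ)) s)
    (hunit : ∀ r, (deriv γ r).1 ^ 2 + (deriv γ r).2 ^ 2 = 1)
    (htrans : -(deriv (deriv (curvA γ)) s) = innerP V (nuA γ s)) :
    HasDerivAt (translatorFlux γ V) (deriv (curvA γ) s ^ 2) s := by
  have hT := hasDerivAt_deriv_of_unit_speed hγ' hunit
  have hx : HasDerivAt (fun r => (deriv γ r).1) (curvA γ s * (nuA γ s).1) s := hT.fst
  have hy : HasDerivAt (fun r => (deriv γ r).2) (curvA γ s * (nuA γ s).2) s := hT.snd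
  refine ((hκ.hasDerivAt.mul hκ'.hasDerivAt).add
    ((hx.const_mul V.1).add (hy.const_mul V.2))).congr_deriv ?_
  simp only [innerP] at htrans
  linear_combination (-curvA γ s) * htrans

theorem deriv_curvA_eq_zero_of_tendsto_translatorFlux_sub {ι : Type*} {l : Filter ι} [l.NeBot]
    {V : ℝ × ℝ} {p q : ι → ℝ} (hγ : ContDiff ℝ 4 γ)
    (hunit : ∀ s, (deriv γ s).1 ^ 2 + (deriv γ s).2 ^ 2 = 1)
    (htrans : ∀ s, -(deriv (deriv (curvA γ)) s) = innerP V (nuA γ s))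
    (hp : Tendsto p l atBot) (hq : Tendsto q l atTop)
    (hdecay : Tendsto (fun i => translatorFlux γ V (q i) - translatorFlux γ V (p i)) l (nhds 0))
    (s : ℝ) : deriv (curvA γ) s = 0 := by
  have hκ : ContDiff ℝ 2 (curvA γ) := contDiff_curvA (hγ.of_le (by norm_num))
  have hflux (r : ℝ) : HasDerivAt (translatorFlux γ V) (deriv (curvA γ) r ^ 2) r :=
    hasDerivAt_translatorFlux ((hγ.of_le (by norm_num)).differentiable_deriv_two r)
      (hκ.differentiable (by norm_num) r) (hκ.differentiable_deriv_two r) hunit (htrans r)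
  have hmono : Monotone (translatorFlux γ V) :=
    monotone_of_hasDerivAt_nonneg hflux fun r => sq_nonneg _
  have hconst : translatorFlux γ V = fun _ => translatorFlux γ V 0 :=
    funext fun r => eq_of_monotone_of_tendsto_sub hmono hp hq hdecay r 0
  have hderiv := hflux s
  rw [hconst] at hderiv
  exact pow_eq_zero_iff two_ne_zero |>.1 (hderiv.unique (hasDerivAt_const s _))

theorem periodic_of_curvA_eq_const {c : ℝ} (hc : c ≠ 0) (hγ : ContDiff ℝ 2 γ)
    (hunit : ∀ s, (deriv γ s).1 ^ 2 + (deriv γ s).2 ^ 2 = 1) (hκ : ∀ s, curvA γ s = c) :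
    Function.Periodic γ (2 * π / c) :=
  periodic_of_hasDerivAt_deriv_smul clockwiseTurn_clockwiseTurn hc
    (hγ.differentiable two_ne_zero) fun s =>
      hκ s ▸ hasDerivAt_deriv_of_unit_speed (hγ.differentiable_deriv_two s) hunit

theorem eq_add_smul_of_curvA_eq_zero (hγ : ContDiff ℝ 2 γ)
    (hunit : ∀ s, (deriv γ s).1 ^ 2 + (deriv γ s).2 ^ 2 = 1) (hκ : ∀ s, curvA γ s = 0) (s : ℝ) :
    γ s = γ 0 + s • deriv γ 0 := by
  have hT (r : ℝ) : HasDerivAt (deriv γ) 0 r := by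
    simpa [hκ r] using hasDerivAt_deriv_of_unit_speed (hγ.differentiable_deriv_two r) hunit
  exact eq_add_smul_of_hasDerivAt_const
    (fun r => eq_of_hasDerivAt_zero hT r 0 ▸ (hγ.differentiable two_ne_zero r).hasDerivAt) s

end Curve

theorem open_translator_with_decay_general
    {ι : Type*} {l : Filter ι} [l.NeBot] (γ : ℝ → ℝ × ℝ) (hγ : ContDiff ℝ 4 γ)
    (hunit : ∀ s, (deriv γ s).1 ^ 2 + (deriv γ s).2 ^ 2 = 1) (V : ℝ × ℝ)
    (htrans : ∀ s, -(deriv (deriv (curvA γ)) s) = innerP V (nuA γ s))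
    {p q : ι → ℝ} (hp : Tendsto p l atBot) (hq : Tendsto q l atTop)
    (hdecay : Tendsto (fun i => translatorFlux γ V (q i) - translatorFlux γ V (p i)) l (nhds 0)) :
    (∀ s, deriv (curvA γ) s = 0) ∧
      ((¬ ∃ P : ℝ, 0 < P ∧ ∀ s, γ (s + P) = γ s) →
        ∀ s, γ s = γ 0 + s • deriv γ 0) := by
  have hκ' := deriv_curvA_eq_zero_of_tendsto_translatorFlux_sub hγ hunit htrans hp hq hdecay
  refine ⟨hκ', fun hper => ?_⟩
  have hγ₂ : ContDiff ℝ 2 γ := hγ.of_le (by norm_num)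
  have hκ_diff : Differentiable ℝ (curvA γ) :=
    (contDiff_curvA (n := 1) (hγ.of_le (by norm_num))).differentiable one_ne_zero
  have hκ (s : ℝ) : curvA γ s = curvA γ 0 := is_const_of_deriv_eq_zero hκ_diff hκ' s 0
  obtain hline | hcircle := eq_or_ne (curvA γ 0) 0
  · exact eq_add_smul_of_curvA_eq_zero hγ₂ hunit fun s => (hκ s).trans hline
  · have hP := periodic_of_curvA_eq_const hcircle hγ₂ hunit hκ
    have hP₀ : 2 * π / curvA γ 0 ≠ 0 := div_ne_zero two_pi_pos.ne' hcircle
    obtain hneg | hpos := hP₀.lt_or_gt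
    · exact absurd ⟨_, neg_pos.2 hneg, hP.neg⟩ hper
    · exact absurd ⟨_, hpos, hP⟩ hper

/-- an open translator for the curve diffusion flow satisfying the decay
condition at infinity has constant curvature; if moreover it is not periodic,
it is a straight line. -/
theorem open_translator_with_decay
    (γ : ℝ → ℝ × ℝ)
    (hsmooth : ContDiff ℝ (⊤ : ℕ∞) γ)
    (hunit : ∀ s, (deriv γ s).1 ^ 2 + (deriv γ s).2 ^ 2 = 1)
    (V : ℝ × ℝ)
    (htrans : ∀ s, -(deriv (deriv (curvA γ)) s) = innerP V (nuA γ s))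
    (hdecay : ∀ p q : ℕ → ℝ, Filter.Tendsto p Filter.atTop Filter.atBot →
      Filter.Tendsto q Filter.atTop Filter.atTop →
      Filter.Tendsto (fun i =>
        (curvA γ (q i) * deriv (curvA γ) (q i) + innerP V (deriv γ (q i)))
          - (curvA γ (p i) * deriv (curvA γ) (p i) + innerP V (deriv γ (p i))))
        Filter.atTop (nhds 0)) :
    (∀ s, deriv (curvA γ) s = 0) ∧
      ((¬ ∃ P : ℝ, 0 < P ∧ ∀ s, γ (s + P) = γ s) →
        ∀ s, γ s = γ 0 + s • deriv γ 0) := by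
  have hq : Tendsto (fun n : ℕ => (n : ℝ)) atTop atTop := tendsto_natCast_atTop_atTop
  have hp : Tendsto (fun n : ℕ => -(n : ℝ)) atTop atBot := tendsto_neg_atTop_atBot.comp hq
  exact open_translator_with_decay_general γ (contDiff_infty.1 hsmooth 4) hunit V htrans hp hq
    (hdecay _ _ hp hq)
end
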